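/- For every integer k ≥ 3, the maximum size of a k-nice subset of ℤ² of height at most 3 is: k+4 if k ≡ 2 (mod 6); k+3 if k mod 6 ∈ {1,3,5}; and k+2 if k mod 6 ∈ {0,4}. That is, every k-nice set of height at most 3 has at most this many elements, and there exists a k-nice set of height at most 3 with exactly this many elements. -/

import Mathlib

/-- A set `Q ⊆ ℤ²` is `k`-nice if every element is a nonzero coprime pair,
`Q` does not contain both a pair and its negation, and all cross determinants
are bounded by `k` in absolute value. -/
def IsKNice (k : ℕ) (Q : Set (ℤ × ℤ)) : Prop :=
  (∀ p ∈ Q, p ≠ (0, 0) ∧ Int.gcd p.1 p.2 = 1) ∧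
  (∀ p ∈ Q, -p ∉ Q) ∧
  (∀ p ∈ Q, ∀ q ∈ Q, |p.1 * q.2 - q.1 * p.2| ≤ (k : ℤ))

/-- `Q` is y-non-negative: all second coordinates are non-negative. -/
def YNonneg (Q : Set (ℤ × ℤ)) : Prop := ∀ p ∈ Q, 0 ≤ p.2

/-- The height of `Q` is at most `h`. -/
def HeightLe (Q : Set (ℤ × ℤ)) (h : ℕ) : Prop := ∀ p ∈ Q, |p.2| ≤ (h : ℤ)

/-- The height of `Q` is exactly `h`: the maximum of `|n|` over `(m, n) ∈ Q` is `h`. -/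
def HeightEq (Q : Set (ℤ × ℤ)) (h : ℕ) : Prop :=
  HeightLe Q h ∧ ∃ p ∈ Q, |p.2| = (h : ℤ)

/-- The claimed maximum size of a `k`-nice set with height at most three. -/
def targetSize (k : ℕ) : ℕ :=
  if k % 6 = 2 then k + 4
  else if k % 6 = 1 ∨ k % 6 = 3 ∨ k % 6 = 5 then k + 3
  else k + 2

/-! Replacing elements by their negatives, we may assume that `Q` lies in the upper half plane. The
pairs of height `1`, `2`, `3` in `Q` have abscissae in intervals `[a, b]`, `[c, d]`, `[e, f]`, where
`c`, `d` are odd and `e`, `f` are prime to `3`; numbering the admissible abscissae consecutively by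
`m`, `⌊m / 2⌋`, `⌊2 m / 3⌋` shows that `Q` has at most
`4 + (b + ⌊d / 2⌋ - ⌊2 e / 3⌋) + (⌊2 f / 3⌋ - a - ⌊c / 2⌋)` elements. The determinant conditions
`3 b - e ≤ k` and `3 d - 2 e ≤ k` bound the first bracket, and the reflection `m ↦ -m` exchanges the
two brackets. The bound for a single bracket depends on `k` modulo `6`, and twice it plus `4` is the
target. An empty row at height `1` or `2` may be treated as an interval with no admissible abscissa,
and if the row at height `3` is empty, the determinants between the other two rows suffice. -/

section SignChange

variable {k h : ℕ} {Q : Set (ℤ × ℤ)} {f : ℤ × ℤ → ℤ × ℤ}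

lemma IsKNice.injOn_of_eq_or_eq_neg (hQ : IsKNice k Q) (hf : ∀ p ∈ Q, f p = p ∨ f p = -p) :
    Set.InjOn f Q := by
  intro p hp q hq hpq
  have hqp : q ≠ -p := fun h => hQ.2.1 p hp (h ▸ hq)
  rcases hf p hp with h | h <;> rcases hf q hq with h' | h' <;> rw [h, h'] at hpq
  · exact hpq
  · exact absurd (by rw [hpq, neg_neg]) hqp
  · exact absurd hpq.symm hqp
  · exact neg_injective hpq

lemma IsKNice.image_of_eq_or_eq_neg (hQ : IsKNice k Q) (hf : ∀ p ∈ Q, f p = p ∨ f p = -p) :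
    IsKNice k (f '' Q) := by
  refine ⟨?_, ?_, ?_⟩
  · rintro _ ⟨p, hp, rfl⟩
    have := hQ.1 p hp
    rcases hf p hp with h | h <;> rw [h] <;> simpa [Prod.ext_iff] using this
  · rintro _ ⟨p, hp, rfl⟩ ⟨q, hq, hqp⟩
    have hpq : p = q ∨ q = -p := by
      rcases hf p hp with h | h <;> rcases hf q hq with h' | h' <;> rw [h, h'] at hqp
      · exact .inr hqp
      · exact .inl (neg_injective hqp).symm
      · exact .inl (by rw [hqp, neg_neg])
      · exact .inr (by rw [← neg_neg q, hqp, neg_neg])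
    rcases hpq with rfl | rfl
    · have hzero : f p = 0 := self_eq_neg.1 hqp
      have hne : p ≠ 0 := (hQ.1 p hp).1
      rcases hf p hp with h | h <;> rw [h] at hzero <;> simp_all
    · exact hQ.2.1 p hp hq
  · rintro _ ⟨p, hp, rfl⟩ _ ⟨q, hq, rfl⟩
    have hdet := hQ.2.2 p hp q hq
    rcases hf p hp with h | h <;> rcases hf q hq with h' | h' <;> rw [h, h'] <;>
      simp only [Prod.fst_neg, Prod.snd_neg, abs_le] at hdet ⊢ <;> constructor <;> linarith

lemma IsKNice.exists_yNonneg (hQ : IsKNice k Q) (hh : HeightLe Q h) :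
    ∃ Q', IsKNice k Q' ∧ YNonneg Q' ∧ HeightLe Q' h ∧ Q'.ncard = Q.ncard := by
  let f : ℤ × ℤ → ℤ × ℤ := fun p => if p.2 < 0 then -p else p
  have hf (p) (_ : p ∈ Q) : f p = p ∨ f p = -p := by grind
  refine ⟨f '' Q, hQ.image_of_eq_or_eq_neg hf, ?_, ?_, (hQ.injOn_of_eq_or_eq_neg hf).ncard_image⟩
  · rintro _ ⟨p, -, rfl⟩
    by_cases hp : p.2 < 0 <;> simp only [f, hp, if_true, if_false, Prod.snd_neg] <;> omega
  · rintro _ ⟨p, hp, rfl⟩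
    rcases hf p hp with h | h <;> rw [h] <;> simpa using hh p hp

end SignChange

section Integers

lemma exists_two_mul_ediv_three_of_not_dvd {m : ℤ} (hm : ¬ 3 ∣ m) :
    ∃ u, m = 3 * u + 1 ∧ 2 * m / 3 = 2 * u ∨ m = 3 * u + 2 ∧ 2 * m / 3 = 2 * u + 1 :=
  ⟨m / 3, by omega⟩

lemma exists_ncard_le_of_monotone_of_injOn {S : Set ℤ} (hS : S.Finite) (hne : S.Nonempty)
    {f : ℤ → ℤ} (hmono : Monotone f) (hinj : S.InjOn f) :
    ∃ a ∈ S, ∃ b ∈ S, (S.ncard : ℤ) ≤ f b - f a + 1 := by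
  have ha : sInf S ∈ S := hne.csInf_mem hS
  have hb : sSup S ∈ S := hne.csSup_mem hS
  refine ⟨_, ha, _, hb, ?_⟩
  have hmaps : f '' S ⊆ Finset.Icc (f (sInf S)) (f (sSup S)) := by
    rintro _ ⟨x, hx, rfl⟩
    rw [Finset.coe_Icc]
    exact ⟨hmono (csInf_le hS.bddBelow hx), hmono (le_csSup hS.bddAbove hx)⟩
  have hcard := Set.ncard_le_ncard hmaps (Finset.finite_toSet _)
  rw [hinj.ncard_image, Set.ncard_coe_finset, Int.card_Icc] at hcard
  have := hmono (csInf_le hS.bddBelow hb)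
  omega

end Integers

section Rows

/-- The row of `Q` at height `n`, recorded by its first coordinates, so that sets of pairs can be
counted height by height. -/
def row (Q : Set (ℤ × ℤ)) (n : ℤ) : Set ℤ := {m | (m, n) ∈ Q}

variable {k h : ℕ} {Q : Set (ℤ × ℤ)}

lemma IsKNice.gcd_eq_one_of_mem_row (hQ : IsKNice k Q) {m n : ℤ} (hm : m ∈ row Q n) :
    Int.gcd m n = 1 :=
  (hQ.1 _ hm).2

lemma IsKNice.det_le_of_mem_row (hQ : IsKNice k Q) {m m' n n' : ℤ} (hm : m ∈ row Q n)
    (hm' : m' ∈ row Q n') : m * n' - m' * n ≤ k :=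
  (abs_le.1 (hQ.2.2 _ hm _ hm')).2

lemma IsKNice.finite_row (hQ : IsKNice k Q) (n : ℤ) : (row Q n).Finite := by
  rcases eq_or_ne n 0 with rfl | hn
  · refine (Set.finite_Icc (-1) 1).subset fun m hm => ?_
    have := hQ.gcd_eq_one_of_mem_row hm
    simp only [Int.gcd_zero_right, Set.mem_Icc] at this ⊢
    omega
  rcases (row Q n).eq_empty_or_nonempty with hempty | ⟨m₀, hm₀⟩
  · simp [hempty]
  refine (Set.finite_Icc (m₀ - k) (m₀ + k)).subset fun m hm => ?_
  have hdist : |m - m₀| ≤ k := calc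
    |m - m₀| ≤ |m - m₀| * |n| := le_mul_of_one_le_right (abs_nonneg _) (Int.one_le_abs hn)
    _ = |m * n - m₀ * n| := by rw [← abs_mul, sub_mul]
    _ ≤ k := hQ.2.2 _ hm _ hm₀
  rw [Set.mem_Icc]
  constructor <;> linarith [abs_le.1 hdist]

lemma IsKNice.ncard_row_zero_le_one (hQ : IsKNice k Q) : (row Q 0).ncard ≤ 1 := by
  have hunit (m) (hm : m ∈ row Q 0) : m = 1 ∨ m = -1 :=
    Int.natAbs_eq_iff.1 (by simpa using hQ.gcd_eq_one_of_mem_row hm)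
  have hneg (hm : 1 ∈ row Q 0) : -1 ∉ row Q 0 := fun hm' => hQ.2.1 _ hm hm'
  refine (Set.ncard_le_one (hs := hQ.finite_row 0)).2 fun m hm m' hm' => ?_
  rcases hunit m hm with rfl | rfl <;> rcases hunit m' hm' with rfl | rfl
  · rfl
  · exact absurd hm' (hneg hm)
  · exact absurd hm (hneg hm')
  · rfl

lemma IsKNice.finite (hQ : IsKNice k Q) (hh : HeightLe Q h) : Q.Finite := by
  have hcover : Q ⊆ ⋃ n ∈ Set.Icc (-h : ℤ) h, (·, n) '' row Q n := fun p hp =>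
    Set.mem_biUnion (abs_le.1 (hh p hp)) ⟨p.1, hp, rfl⟩
  exact ((Set.finite_Icc _ _).biUnion fun n _ => (hQ.finite_row n).image _).subset hcover

lemma IsKNice.ncard_le_sum_ncard_row (hQ : IsKNice k Q) (hpos : YNonneg Q) (hh : HeightLe Q h) :
    Q.ncard ≤ ∑ n ∈ Finset.range (h + 1), (row Q n).ncard := by
  let layer (n : ℕ) : Set (ℤ × ℤ) := (·, (n : ℤ)) '' row Q n
  have hcover : Q ⊆ ⋃ n ∈ Finset.range (h + 1), layer n := by
    intro p hp
    obtain ⟨m, n⟩ := p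
    lift n to ℕ using hpos _ hp
    have hn : n ≤ h := by simpa using hh _ hp
    exact Set.mem_biUnion (Finset.mem_coe.2 (Finset.mem_range_succ_iff.2 hn)) ⟨m, hp, rfl⟩
  have hfinite : (⋃ n ∈ Finset.range (h + 1), layer n).Finite :=
    (Finset.finite_toSet _).biUnion fun n _ => (hQ.finite_row n).image _
  calc Q.ncard ≤ (⋃ n ∈ Finset.range (h + 1), layer n).ncard := Set.ncard_le_ncard hcover hfinite
    _ ≤ ∑ n ∈ Finset.range (h + 1), (layer n).ncard := Finset.set_ncard_biUnion_le _ _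
    _ ≤ ∑ n ∈ Finset.range (h + 1), (row Q n).ncard :=
      Finset.sum_le_sum fun n _ => Set.ncard_image_le (hQ.finite_row n)

lemma IsKNice.odd_of_mem_row_two (hQ : IsKNice k Q) {m : ℤ} (hm : m ∈ row Q 2) : Odd m := by
  rw [← Int.not_even_iff_odd, even_iff_two_dvd]
  intro h
  simpa using (Int.gcd_eq_natAbs_right h).symm.trans (hQ.gcd_eq_one_of_mem_row hm)

lemma IsKNice.not_three_dvd_of_mem_row_three (hQ : IsKNice k Q) {m : ℤ} (hm : m ∈ row Q 3) :
    ¬ 3 ∣ m := fun h => by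
  simpa using (Int.gcd_eq_natAbs_right h).symm.trans (hQ.gcd_eq_one_of_mem_row hm)

lemma IsKNice.exists_ncard_row_one_le (hQ : IsKNice k Q) (hne : (row Q 1).Nonempty) :
    ∃ a ∈ row Q 1, ∃ b ∈ row Q 1, ((row Q 1).ncard : ℤ) ≤ b - a + 1 :=
  exists_ncard_le_of_monotone_of_injOn (hQ.finite_row 1) hne monotone_id (Set.injOn_id _)

lemma IsKNice.exists_ncard_row_two_le (hQ : IsKNice k Q) (hne : (row Q 2).Nonempty) :
    ∃ c ∈ row Q 2, ∃ d ∈ row Q 2, ((row Q 2).ncard : ℤ) ≤ d / 2 - c / 2 + 1 := by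
  refine exists_ncard_le_of_monotone_of_injOn (f := (· / 2)) (hQ.finite_row 2) hne
    (fun x y hxy => by dsimp only; omega) fun x hx y hy (hxy : x / 2 = y / 2) => ?_
  have hxodd := hQ.odd_of_mem_row_two hx
  have hyodd := hQ.odd_of_mem_row_two hy
  rw [← Int.two_mul_ediv_two_add_one_of_odd hxodd, ← Int.two_mul_ediv_two_add_one_of_odd hyodd, hxy]

lemma IsKNice.exists_ncard_row_three_le (hQ : IsKNice k Q) (hne : (row Q 3).Nonempty) :
    ∃ e ∈ row Q 3, ∃ f ∈ row Q 3, ((row Q 3).ncard : ℤ) ≤ 2 * f / 3 - 2 * e / 3 + 1 := by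
  refine exists_ncard_le_of_monotone_of_injOn (f := (2 * · / 3)) (hQ.finite_row 3) hne
    (fun x y hxy => by dsimp only; omega) fun x hx y hy (hxy : 2 * x / 3 = 2 * y / 3) => ?_
  obtain ⟨u, hu⟩ := exists_two_mul_ediv_three_of_not_dvd (hQ.not_three_dvd_of_mem_row_three hx)
  obtain ⟨v, hv⟩ := exists_two_mul_ediv_three_of_not_dvd (hQ.not_three_dvd_of_mem_row_three hy)
  omega

end Rows

section UpperBound

/-- The bound for each of `b + ⌊d / 2⌋ - ⌊2 e / 3⌋` and `⌊2 f / 3⌋ - a - ⌊c / 2⌋`, the two brackets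
that control the size of a `k`-nice set with rows spanning `[a, b]`, `[c, d]` and `[e, f]`. It is
integer-valued because `k / 2 - 1` is negative for `k = 0`. -/
def bracketBound (k : ℕ) : ℤ := if k % 6 = 0 ∨ k % 6 = 4 then k / 2 - 1 else k / 2

lemma targetSize_eq_two_mul_bracketBound_add_four (k : ℕ) :
    (targetSize k : ℤ) = 2 * bracketBound k + 4 := by
  unfold targetSize bracketBound
  split_ifs <;> omega

lemma add_two_le_targetSize (k : ℕ) : k + 2 ≤ targetSize k := by
  unfold targetSize
  split_ifs <;> omega

lemma add_three_le_targetSize_of_odd {k : ℕ} (hk : k % 2 = 1) : k + 3 ≤ targetSize k := by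
  unfold targetSize
  split_ifs <;> omega

variable {k : ℕ} {Q : Set (ℤ × ℤ)}

-- Adding `hbe` and half of `hde` gives `3 * bracket ≤ (3 * k + 1) / 2`; residues modulo `2` and `3`
-- give the rest.
lemma right_bracket_le {b d e : ℤ} (hd : Odd d) (he : ¬ 3 ∣ e) (hbe : 3 * b - e ≤ k)
    (hde : 3 * d - 2 * e ≤ k) : b + d / 2 - 2 * e / 3 ≤ bracketBound k := by
  have hd2 := Int.two_mul_ediv_two_add_one_of_odd hd
  generalize d / 2 = x at *
  unfold bracketBound
  obtain ⟨u, ⟨rfl, hu⟩ | ⟨rfl, hu⟩⟩ := exists_two_mul_ediv_three_of_not_dvd he <;> rw [hu] <;>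
    split_ifs <;> omega

lemma left_bracket_le {a c f : ℤ} (hc : Odd c) (hf : ¬ 3 ∣ f) (hfa : f - 3 * a ≤ k)
    (hfc : 2 * f - 3 * c ≤ k) : 2 * f / 3 - a - c / 2 ≤ bracketBound k := by
  have hreflect := right_bracket_le (k := k) (b := -a) (d := -c) (e := -f) hc.neg (by omega)
    (by omega) (by omega)
  have hc2 : -c / 2 = -(c / 2) - 1 := by
    have := Int.two_mul_ediv_two_add_one_of_odd hc
    omega
  have hf3 : 2 * -f / 3 = -(2 * f / 3) - 1 := by
    obtain ⟨u, hu⟩ := exists_two_mul_ediv_three_of_not_dvd hf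
    omega
  omega

lemma IsKNice.exists_row_one_window (hQ : IsKNice k Q) {e f : ℤ} (he : e ∈ row Q 3)
    (hf : f ∈ row Q 3) :
    ∃ a b, 3 * b - e ≤ k ∧ f - 3 * a ≤ k ∧ ((row Q 1).ncard : ℤ) ≤ b - a + 1 := by
  have hfe := hQ.det_le_of_mem_row hf he
  rcases (row Q 1).eq_empty_or_nonempty with h1 | h1
  · exact ⟨(k + e) / 3 + 1, (k + e) / 3, by omega, by omega, by simp [h1]⟩
  · obtain ⟨a, ha, b, hb, hcard⟩ := hQ.exists_ncard_row_one_le h1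
    have hbe := hQ.det_le_of_mem_row hb he
    have hfa := hQ.det_le_of_mem_row hf ha
    exact ⟨a, b, by omega, by omega, hcard⟩

lemma IsKNice.exists_row_two_window (hQ : IsKNice k Q) {e f : ℤ} (he : e ∈ row Q 3)
    (hf : f ∈ row Q 3) :
    ∃ c d, Odd c ∧ Odd d ∧ 3 * d - 2 * e ≤ k ∧ 2 * f - 3 * c ≤ k ∧
      ((row Q 2).ncard : ℤ) ≤ d / 2 - c / 2 + 1 := by
  have hfe := hQ.det_le_of_mem_row hf he
  rcases (row Q 2).eq_empty_or_nonempty with h2 | h2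
  · obtain ⟨x, hx⟩ : ∃ x, x = (k + 2 * e - 3) / 6 := ⟨_, rfl⟩
    refine ⟨2 * (x + 1) + 1, 2 * x + 1, odd_two_mul_add_one _, odd_two_mul_add_one _, by omega,
      by omega, ?_⟩
    rw [h2, Set.ncard_empty]
    omega
  · obtain ⟨c, hc, d, hd, hcard⟩ := hQ.exists_ncard_row_two_le h2
    have hde := hQ.det_le_of_mem_row hd he
    have hfc := hQ.det_le_of_mem_row hf hc
    exact ⟨c, d, hQ.odd_of_mem_row_two hc, hQ.odd_of_mem_row_two hd, by omega, by omega, hcard⟩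

lemma IsKNice.ncard_rows_le_of_row_three_eq_empty (hQ : IsKNice k Q) (h3 : row Q 3 = ∅) :
    1 + (row Q 1).ncard + (row Q 2).ncard + (row Q 3).ncard ≤ targetSize k := by
  have hT := add_two_le_targetSize k
  rw [h3, Set.ncard_empty]
  rcases (row Q 1).eq_empty_or_nonempty with h1 | h1 <;>
    rcases (row Q 2).eq_empty_or_nonempty with h2 | h2
  · simp only [h1, h2, Set.ncard_empty]
    omega
  · obtain ⟨c, hc, d, hd, hcard⟩ := hQ.exists_ncard_row_two_le h2
    have := hQ.det_le_of_mem_row hd hc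
    simp only [h1, Set.ncard_empty]
    omega
  · obtain ⟨a, ha, b, hb, hcard⟩ := hQ.exists_ncard_row_one_le h1
    have := hQ.det_le_of_mem_row hb ha
    simp only [h2, Set.ncard_empty]
    omega
  · obtain ⟨a, ha, b, hb, hcard₁⟩ := hQ.exists_ncard_row_one_le h1
    obtain ⟨c, hc, d, hd, hcard₂⟩ := hQ.exists_ncard_row_two_le h2
    have hc2 := Int.two_mul_ediv_two_add_one_of_odd (hQ.odd_of_mem_row_two hc)
    have hd2 := Int.two_mul_ediv_two_add_one_of_odd (hQ.odd_of_mem_row_two hd)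
    have hbc : b * 2 - c * 1 ≤ k := hQ.det_le_of_mem_row hb hc
    have hda : d * 1 - a * 2 ≤ k := hQ.det_le_of_mem_row hd ha
    rcases Nat.mod_two_eq_zero_or_one k with hk | hk
    · omega
    · have := add_three_le_targetSize_of_odd hk
      omega

lemma IsKNice.ncard_rows_le_of_row_three_nonempty (hQ : IsKNice k Q) (h3 : (row Q 3).Nonempty) :
    1 + (row Q 1).ncard + (row Q 2).ncard + (row Q 3).ncard ≤ targetSize k := by
  obtain ⟨e, he, f, hf, hcard₃⟩ := hQ.exists_ncard_row_three_le h3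
  obtain ⟨a, b, hbe, hfa, hcard₁⟩ := hQ.exists_row_one_window he hf
  obtain ⟨c, d, hc, hd, hde, hfc, hcard₂⟩ := hQ.exists_row_two_window he hf
  have hright : b + d / 2 - 2 * e / 3 ≤ bracketBound k :=
    right_bracket_le hd (hQ.not_three_dvd_of_mem_row_three he) hbe hde
  have hleft : 2 * f / 3 - a - c / 2 ≤ bracketBound k :=
    left_bracket_le hc (hQ.not_three_dvd_of_mem_row_three hf) hfa hfc
  have htarget := targetSize_eq_two_mul_bracketBound_add_four k
  omega

theorem IsKNice.ncard_le_targetSize (hQ : IsKNice k Q) (hh : HeightLe Q 3) :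
    Q.ncard ≤ targetSize k := by
  obtain ⟨Q', hQ', hpos, hh', hcard⟩ := hQ.exists_yNonneg hh
  have hsum := hQ'.ncard_le_sum_ncard_row hpos hh'
  have hzero := hQ'.ncard_row_zero_le_one
  have hrows : 1 + (row Q' 1).ncard + (row Q' 2).ncard + (row Q' 3).ncard ≤ targetSize k :=
    (row Q' 3).eq_empty_or_nonempty.elim hQ'.ncard_rows_le_of_row_three_eq_empty
      hQ'.ncard_rows_le_of_row_three_nonempty
  simp only [Finset.sum_range_succ, Finset.sum_range_zero, Nat.cast_ofNat, Nat.cast_zero,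
    Nat.cast_one] at hsum
  omega

end UpperBound

section Stack

/-- The set of height at most `h` whose row at height `n` is `R n`, for `0 ≤ n ≤ h`; it serves to
build `k`-nice sets from prescribed rows. -/
def stack (h : ℕ) (R : ℕ → Finset ℤ) : Finset (ℤ × ℤ) :=
  ((Finset.range (h + 1)).sigma R).image fun x => (x.2, (x.1 : ℤ))

variable {k h : ℕ} {R : ℕ → Finset ℤ}

lemma mem_stack {p : ℤ × ℤ} : p ∈ stack h R ↔ ∃ n ≤ h, ∃ m ∈ R n, (m, (n : ℤ)) = p := by
  simp [stack, and_assoc]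

lemma card_stack (h : ℕ) (R : ℕ → Finset ℤ) :
    (stack h R).card = ∑ n ∈ Finset.range (h + 1), (R n).card := by
  rw [stack, Finset.card_image_of_injective, Finset.card_sigma]
  rintro ⟨n, m⟩ ⟨n', m'⟩ hx
  simp_all

lemma heightLe_stack (h : ℕ) (R : ℕ → Finset ℤ) : HeightLe (stack h R) h := by
  intro p hp
  obtain ⟨n, hn, m, -, rfl⟩ := mem_stack.1 hp
  simpa using hn

lemma isKNice_stack (hzero : ∀ m ∈ R 0, 0 < m) (hcop : ∀ n ≤ h, ∀ m ∈ R n, IsCoprime m n)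
    (hdet : ∀ n ≤ h, ∀ n' ≤ h, ∀ m ∈ R n, ∀ m' ∈ R n', m * n' - m' * n ≤ (k : ℤ)) :
    IsKNice k (stack h R) := by
  refine ⟨fun p hp => ?_, fun p hp hneg => ?_, fun p hp q hq => ?_⟩
  · obtain ⟨n, hn, m, hm, rfl⟩ := mem_stack.1 hp
    have hmn := hcop n hn m hm
    refine ⟨fun h => ?_, Int.isCoprime_iff_gcd_eq_one.1 hmn⟩
    obtain ⟨rfl, rfl⟩ : m = 0 ∧ n = 0 := by simpa using h
    exact lt_irrefl _ (hzero 0 hm)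
  · obtain ⟨n, hn, m, hm, rfl⟩ := mem_stack.1 hp
    obtain ⟨n', hn', m', hm', heq⟩ := mem_stack.1 hneg
    simp only [Prod.neg_mk, Prod.mk.injEq] at heq
    obtain ⟨rfl, rfl⟩ : n = 0 ∧ n' = 0 := by omega
    have := hzero m hm
    have := hzero m' hm'
    omega
  · obtain ⟨n, hn, m, hm, rfl⟩ := mem_stack.1 hp
    obtain ⟨n', hn', m', hm', rfl⟩ := mem_stack.1 hq
    exact abs_le.2 ⟨by linarith [hdet n' hn' n hn m' hm' m hm], hdet n hn n' hn' m hm m' hm'⟩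

end Stack

section Construction

/-- The rows of a set containing `(1, 0)`, where the rows at heights `1`, `2`, `3` are given by
sets of indices in the increasing enumerations `x ↦ x`, `x ↦ 2 x + 1` and `x ↦ x + ⌊x / 2⌋ + 1` of
the integers coprime to `1`, `2` and `3`. These are inverse to the numberings `m`, `⌊m / 2⌋` and
`⌊2 m / 3⌋` used for the upper bound. -/
def enumeratedRows (I₁ I₂ I₃ : Finset ℤ) : ℕ → Finset ℤ
  | 0 => {1}
  | 1 => I₁
  | 2 => I₂.image fun x => 2 * x + 1
  | 3 => I₃.image fun x => x + x / 2 + 1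
  | _ => ∅

lemma isCoprime_of_mem_enumeratedRows {I₁ I₂ I₃ : Finset ℤ} {n : ℕ} {m : ℤ}
    (hm : m ∈ enumeratedRows I₁ I₂ I₃ n) : IsCoprime m n := by
  match n, hm with
  | 0, hm =>
    rw [Finset.mem_singleton.1 hm]
    exact isCoprime_one_left
  | 1, _ =>
    rw [Nat.cast_one]
    exact isCoprime_one_right
  | 2, hm =>
    obtain ⟨x, -, rfl⟩ := Finset.mem_image.1 hm
    exact ⟨1, -x, by push_cast; ring⟩
  | 3, hm =>
    obtain ⟨x, -, rfl⟩ := Finset.mem_image.1 hm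
    rcases Int.even_or_odd' x with ⟨y, rfl | rfl⟩
    · exact ⟨1, -y, by push_cast; omega⟩
    · exact ⟨-1, y + 1, by push_cast; omega⟩
  | _ + 4, hm => simp [enumeratedRows] at hm

lemma card_stack_enumeratedRows (I₁ I₂ I₃ : Finset ℤ) :
    (stack 3 (enumeratedRows I₁ I₂ I₃)).card = 1 + I₁.card + I₂.card + I₃.card := by
  have hinj₂ : Function.Injective fun x : ℤ => 2 * x + 1 := fun x y h => by
    dsimp only at h; omega
  have hinj₃ : Function.Injective fun x : ℤ => x + x / 2 + 1 := fun x y h => by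
    dsimp only at h; omega
  simp [card_stack, Finset.sum_range_succ, enumeratedRows, Finset.card_image_of_injective _ hinj₂,
    Finset.card_image_of_injective _ hinj₃]

lemma exists_isKNice_of_enumeratedRows {k N : ℕ} {I₁ I₂ I₃ : Finset ℤ}
    (hdet : ∀ n ≤ 3, ∀ n' ≤ 3, ∀ m ∈ enumeratedRows I₁ I₂ I₃ n,
      ∀ m' ∈ enumeratedRows I₁ I₂ I₃ n', m * n' - m' * n ≤ (k : ℤ))
    (hcard : 1 + I₁.card + I₂.card + I₃.card = N) :
    ∃ Q : Set (ℤ × ℤ), IsKNice k Q ∧ HeightLe Q 3 ∧ Q.Finite ∧ Q.ncard = N := by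
  refine ⟨stack 3 (enumeratedRows I₁ I₂ I₃), isKNice_stack ?_ ?_ hdet, heightLe_stack _ _,
    Finset.finite_toSet _, ?_⟩
  · simp [enumeratedRows]
  · exact fun n _ m hm => isCoprime_of_mem_enumeratedRows hm
  · rw [Set.ncard_coe_finset, card_stack_enumeratedRows, hcard]

lemma exists_isKNice_ncard_eq_add_two {k : ℕ} (hk : 1 ≤ k) :
    ∃ Q : Set (ℤ × ℤ), IsKNice k Q ∧ HeightLe Q 3 ∧ Q.Finite ∧ Q.ncard = k + 2 := by
  refine exists_isKNice_of_enumeratedRows (I₁ := Finset.Icc 0 k) (I₂ := ∅) (I₃ := ∅) ?_ ?_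
  · intro n hn n' hn' m hm m' hm'
    interval_cases n <;> interval_cases n' <;>
      simp only [enumeratedRows, Finset.mem_singleton, Finset.mem_Icc, Finset.image_empty,
        Finset.notMem_empty] at hm hm' <;> push_cast <;> omega
  · simp only [Int.card_Icc, Finset.card_empty]
    omega

lemma exists_isKNice_ncard_eq_add_three {k : ℕ} (hk : 3 ≤ k) (hodd : k % 2 = 1) :
    ∃ Q : Set (ℤ × ℤ), IsKNice k Q ∧ HeightLe Q 3 ∧ Q.Finite ∧ Q.ncard = k + 3 := by
  refine exists_isKNice_of_enumeratedRows
    (I₁ := Finset.Icc 0 k) (I₂ := {(k : ℤ) / 2}) (I₃ := ∅) ?_ ?_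
  · intro n hn n' hn' m hm m' hm'
    interval_cases n <;> interval_cases n' <;>
      simp only [enumeratedRows, Finset.mem_singleton, Finset.mem_image, Finset.mem_Icc,
        Finset.image_empty, Finset.notMem_empty] at hm hm' <;> push_cast <;> omega
  · simp only [Int.card_Icc, Finset.card_empty, Finset.card_singleton]
    omega

lemma exists_isKNice_ncard_eq_add_four {k : ℕ} (hk : 3 ≤ k) (hmod : k % 6 = 2) :
    ∃ Q : Set (ℤ × ℤ), IsKNice k Q ∧ HeightLe Q 3 ∧ Q.Finite ∧ Q.ncard = k + 4 := by
  obtain ⟨t, rfl⟩ : ∃ t, k = 6 * t + 2 := ⟨k / 6, by omega⟩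
  -- Every `s` makes both brackets of the upper bound equal to `k / 2 = 3 t + 1`; the choice of `s`
  -- balances the determinants inside row `2`, where `4 (2 t - s) ≤ k`, and row `3`.
  obtain ⟨s, hs⟩ : ∃ s : ℤ, s = (t : ℤ) / 2 := ⟨_, rfl⟩
  refine exists_isKNice_of_enumeratedRows (I₁ := Finset.Icc (s - 2 * t) (2 * t + 1))
    (I₂ := Finset.Icc (s - t) t) (I₃ := Finset.Icc 0 (2 * s + 1)) ?_ ?_
  · intro n hn n' hn' m hm m' hm'
    interval_cases n <;> interval_cases n' <;>
      simp only [enumeratedRows, Finset.mem_singleton, Finset.mem_image, Finset.mem_Icc]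
        at hm hm' <;> push_cast <;> omega
  · simp only [Int.card_Icc]
    omega

end Construction

theorem max_size_kNice_height_le_three (k : ℕ) (hk : 3 ≤ k) :
    (∀ Q : Set (ℤ × ℤ), IsKNice k Q → HeightLe Q 3 →
      Q.Finite ∧ Q.ncard ≤ targetSize k) ∧
    (∃ Q : Set (ℤ × ℤ), IsKNice k Q ∧ HeightLe Q 3 ∧
      Q.Finite ∧ Q.ncard = targetSize k) := by
  refine ⟨fun Q hQ hh => ⟨hQ.finite hh, hQ.ncard_le_targetSize hh⟩, ?_⟩
  unfold targetSize
  split_ifs with htwo hodd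
  · exact exists_isKNice_ncard_eq_add_four hk htwo
  · exact exists_isKNice_ncard_eq_add_three hk (by omega)
  · exact exists_isKNice_ncard_eq_add_two (by omega)
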